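/- arXiv:1702.00675 — 2 statements merged into one kernel-verified Lean document; each statement's English description precedes it below -/
import Mathlib

section
/- For every integer k ≥ 1, the functions φ_k and φ_{k+1} − z n_k /(2(k+1)ρ) are independent of all n_ℓ with ℓ ≥ k; that is, if two refraction indices n, ñ satisfy n_m = ñ_m on Γ for all 0 ≤ m ≤ k−1, then the corresponding phase coefficients satisfy φ_k = φ̃'_k and φ_{k+1} − z n_k/(2(k+1)ρ) = φ̃'_{k+1} − z ñ_k/(2(k+1)ρ), where φ̃'_m denote the phase coefficients built from ñ. -/
/- Setting: near the boundary we use normal coordinates (x₁, x'), with x' ranging in a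
chart of Γ modelled by ℝ^n (n = d−1).  The data are the Taylor coefficients `R_ℓ` of the
metric matrix `R(x)`, the Taylor coefficients `n_k = (k!)^{−1}∂_ν^k n|_Γ` of the
refraction index, and `ρ = √(−r₀ + z n₀)`, `Im ρ > 0`.  The phase coefficients `φ_k`
are determined by `φ₀ = −⟨x',ξ'⟩`, `φ₁ = ρ` and the eikonal recursion (3.12). -/

noncomputable section

/-- Square root with nonnegative imaginary part. -/
def ssqrt (w : ℂ) : ℂ :=
  if 0 ≤ (w ^ (1 / 2 : ℂ)).im then w ^ (1 / 2 : ℂ) else -(w ^ (1 / 2 : ℂ))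

/-- `z ∈ Z₁ ∪ Z₂ ∪ Z₃`. -/
def Zall (z : ℂ) : Prop :=
  (z.re = 1 ∧ 0 < |z.im| ∧ |z.im| ≤ 1) ∨ (z.re = -1 ∧ |z.im| ≤ 1) ∨
    (|z.re| ≤ 1 ∧ |z.im| = 1)

variable (n : ℕ)

/-- The `i`-th coordinate vector of `ℝ^n`. -/
def ev (i : Fin n) : EuclideanSpace ℝ (Fin n) := EuclideanSpace.single i (1 : ℝ)

/-- Derivative of a symbol in the base (`x'`) direction `v`. -/
def Dx (f : (EuclideanSpace ℝ (Fin n)) × (EuclideanSpace ℝ (Fin n)) → ℂ)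
    (p : (EuclideanSpace ℝ (Fin n)) × (EuclideanSpace ℝ (Fin n)))
    (v : EuclideanSpace ℝ (Fin n)) : ℂ :=
  fderiv ℝ f p (v, 0)

/-- `⟨R_ℓ ∇_{x'} f, ∇_{x'} g⟩ = ∑_{a,b} (R_ℓ)_{ab} ∂_a f ∂_b g`. -/
def RPair (Rℓ : EuclideanSpace ℝ (Fin n) → (EuclideanSpace ℝ (Fin n) →L[ℝ] EuclideanSpace ℝ (Fin n)))
    (f g : (EuclideanSpace ℝ (Fin n)) × (EuclideanSpace ℝ (Fin n)) → ℂ)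
    (p : (EuclideanSpace ℝ (Fin n)) × (EuclideanSpace ℝ (Fin n))) : ℂ :=
  ∑ a : Fin n, ∑ b : Fin n,
    ((inner ℝ (Rℓ p.1 (ev n a)) (ev n b) : ℝ) : ℂ) * Dx n f p (ev n a) * Dx n g p (ev n b)

/-- The eikonal recursion (3.12):
`∑_{k+j=K} (k+1)(j+1) φ_{k+1} φ_{j+1} + ∑_{k+j+ℓ=K} ⟨R_ℓ ∇_{x'}φ_k, ∇_{x'}φ_j⟩ = z n_K`
for every `K`. -/
def EikonalRec
    (Rk : ℕ → EuclideanSpace ℝ (Fin n) → (EuclideanSpace ℝ (Fin n) →L[ℝ] EuclideanSpace ℝ (Fin n)))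
    (nk : ℕ → EuclideanSpace ℝ (Fin n) → ℝ) (z : ℂ)
    (φ : ℕ → (EuclideanSpace ℝ (Fin n)) × (EuclideanSpace ℝ (Fin n)) → ℂ) : Prop :=
  ∀ K : ℕ, ∀ p,
    (∑ k ∈ Finset.range (K + 1),
      (((k + 1) * (K - k + 1) : ℕ) : ℂ) * φ (k + 1) p * φ (K - k + 1) p) +
    (∑ ℓ ∈ Finset.range (K + 1), ∑ k ∈ Finset.range (K + 1 - ℓ),
      RPair n (Rk ℓ) (φ k) (φ (K - ℓ - k)) p) = z * (nk K p.1 : ℂ)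

/-- `ρ = √(−⟨R₀(x')ξ',ξ'⟩ + z n₀(x'))`, branch with `Im ρ > 0`. -/
def rho
    (R₀ : EuclideanSpace ℝ (Fin n) → (EuclideanSpace ℝ (Fin n) →L[ℝ] EuclideanSpace ℝ (Fin n)))
    (n₀ : EuclideanSpace ℝ (Fin n) → ℝ) (z : ℂ)
    (p : (EuclideanSpace ℝ (Fin n)) × (EuclideanSpace ℝ (Fin n))) : ℂ :=
  ssqrt (-((inner ℝ (R₀ p.1 p.2) p.2 : ℝ) : ℂ) + z * (n₀ p.1 : ℂ))

theorem ssqrt_ne_zero {w : ℂ} (hw : w ≠ 0) : ssqrt w ≠ 0 := by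
  have h : w ^ (1 / 2 : ℂ) ≠ 0 := by
    rw [Ne, Complex.cpow_eq_zero_iff]
    exact fun h => hw h.1
  unfold ssqrt
  split_ifs
  · exact h
  · exact neg_ne_zero.mpr h

theorem arg_ne_zero {z : ℂ} (hz : Zall z) {r m : ℝ} (hr : 0 ≤ r) (hm : 0 < m) :
    -(r : ℂ) + z * (m : ℂ) ≠ 0 := by
  intro h
  have h1 := congrArg Complex.re h
  have h2 := congrArg Complex.im h
  simp at h1 h2
  have h2' : z.im = 0 := h2.resolve_right hm.ne'
  rcases hz with hz | hz | hz
  · rw [h2'] at hz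
    simp at hz
  · rw [hz.1] at h1
    linarith
  · rw [h2'] at hz
    simp at hz

theorem eikonal_step (n : ℕ)
    (Rk : ℕ → EuclideanSpace ℝ (Fin n) → (EuclideanSpace ℝ (Fin n) →L[ℝ] EuclideanSpace ℝ (Fin n)))
    (z : ℂ) (nk nk' : ℕ → EuclideanSpace ℝ (Fin n) → ℝ)
    (φ φ' : ℕ → (EuclideanSpace ℝ (Fin n)) × (EuclideanSpace ℝ (Fin n)) → ℂ)
    (hrec : EikonalRec n Rk nk z φ) (hrec' : EikonalRec n Rk nk' z φ')
    (M : ℕ) (h : ∀ m ≤ M + 1, φ m = φ' m)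
    (p : (EuclideanSpace ℝ (Fin n)) × (EuclideanSpace ℝ (Fin n))) :
    2 * ((M + 1 : ℕ) + 1 : ℂ) * φ 1 p * (φ (M + 2) p - φ' (M + 2) p) =
      z * (nk (M + 1) p.1 : ℂ) - z * (nk' (M + 1) p.1 : ℂ) := by
  have e := hrec (M + 1) p
  have e' := hrec' (M + 1) p
  have hR : (∑ ℓ ∈ Finset.range (M + 1 + 1), ∑ k ∈ Finset.range (M + 1 + 1 - ℓ),
      RPair n (Rk ℓ) (φ k) (φ (M + 1 - ℓ - k)) p) =
      ∑ ℓ ∈ Finset.range (M + 1 + 1), ∑ k ∈ Finset.range (M + 1 + 1 - ℓ),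
      RPair n (Rk ℓ) (φ' k) (φ' (M + 1 - ℓ - k)) p := by
    refine Finset.sum_congr rfl fun l _ => Finset.sum_congr rfl fun k hk => ?_
    have := Finset.mem_range.mp hk
    rw [h k (by omega), h (M + 1 - l - k) (by omega)]
  rw [hR, Finset.sum_range_succ, Finset.sum_range_succ'] at e
  rw [Finset.sum_range_succ, Finset.sum_range_succ'] at e'
  have hS : (∑ k ∈ Finset.range M, (((k + 1 + 1) * (M + 1 - (k + 1) + 1) : ℕ) : ℂ) *
      φ (k + 1 + 1) p * φ (M + 1 - (k + 1) + 1) p) =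
      ∑ k ∈ Finset.range M, (((k + 1 + 1) * (M + 1 - (k + 1) + 1) : ℕ) : ℂ) *
      φ' (k + 1 + 1) p * φ' (M + 1 - (k + 1) + 1) p := by
    refine Finset.sum_congr rfl fun k hk => ?_
    have := Finset.mem_range.mp hk
    rw [h (k + 1 + 1) (by omega), h (M + 1 - (k + 1) + 1) (by omega)]
  rw [hS] at e
  have h1 := congrFun (h 1 (by omega)) p
  simp only [Nat.sub_self, Nat.sub_zero, zero_add] at e e'
  push_cast at e e' ⊢
  rw [← h1] at e'
  linear_combination e - e'

/-- **Lemma 3.3.** For every integer `k ≥ 1`, the functions `φ_k` and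
`φ_{k+1} − z n_k/(2(k+1)ρ)` are independent of all `n_ℓ` with `ℓ ≥ k`: if two
refraction indices have the same boundary Taylor coefficients `n_m` for `m < k`, the
corresponding phase coefficients satisfy `φ_k = φ'_k` and
`φ_{k+1} − z n_k/(2(k+1)ρ) = φ'_{k+1} − z n'_k/(2(k+1)ρ)`. -/
theorem statement_10 (n : ℕ) (hn : 0 < n)
    (Rk : ℕ → EuclideanSpace ℝ (Fin n) → (EuclideanSpace ℝ (Fin n) →L[ℝ] EuclideanSpace ℝ (Fin n)))
    (hRk : ∀ ℓ, ContDiff ℝ (⊤ : ℕ∞) (Rk ℓ))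
    (hR₀ell : ∃ c : ℝ, 0 < c ∧ ∀ x ξ, c * ‖ξ‖ ^ 2 ≤ (inner ℝ (Rk 0 x ξ) ξ : ℝ))
    (z : ℂ) (hz : Zall z)
    (nk nk' : ℕ → EuclideanSpace ℝ (Fin n) → ℝ)
    (hnk : ∀ m, ContDiff ℝ (⊤ : ℕ∞) (nk m)) (hnk' : ∀ m, ContDiff ℝ (⊤ : ℕ∞) (nk' m))
    (hn₀pos : ∃ c : ℝ, 0 < c ∧ ∀ x, c ≤ nk 0 x)
    (k : ℕ) (hk : 1 ≤ k)
    -- the two refraction indices have the same boundary Taylor coefficients below k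
    (hagree : ∀ m < k, nk m = nk' m)
    (φ φ' : ℕ → (EuclideanSpace ℝ (Fin n)) × (EuclideanSpace ℝ (Fin n)) → ℂ)
    (hφsmooth : ∀ m, ContDiff ℝ (⊤ : ℕ∞) (φ m)) (hφ'smooth : ∀ m, ContDiff ℝ (⊤ : ℕ∞) (φ' m))
    (hφ0 : φ 0 = fun p => -((inner ℝ p.1 p.2 : ℝ) : ℂ))
    (hφ'0 : φ' 0 = fun p => -((inner ℝ p.1 p.2 : ℝ) : ℂ))
    (hφ1 : φ 1 = rho n (Rk 0) (nk 0) z) (hφ'1 : φ' 1 = rho n (Rk 0) (nk' 0) z)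
    (hrec : EikonalRec n Rk nk z φ) (hrec' : EikonalRec n Rk nk' z φ') :
    (∀ p, φ k p = φ' k p) ∧
    ∀ p, φ (k + 1) p - z * (nk k p.1 : ℂ) / (2 * (k + 1) * rho n (Rk 0) (nk 0) z p) =
      φ' (k + 1) p - z * (nk' k p.1 : ℂ) / (2 * (k + 1) * rho n (Rk 0) (nk 0) z p) := by
  have hρ : ∀ p, rho n (Rk 0) (nk 0) z p ≠ 0 := by
    intro p
    obtain ⟨c, hc, hR⟩ := hR₀ell
    obtain ⟨d, hd, hN⟩ := hn₀pos
    refine ssqrt_ne_zero (arg_ne_zero hz ?_ (lt_of_lt_of_le hd (hN p.1)))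
    exact le_trans (by positivity) (hR p.1 p.2)
  have key : ∀ j, j + 1 ≤ k → ∀ m ≤ j + 1, φ m = φ' m := by
    intro j
    induction j with
    | zero =>
      intro hj m hm
      interval_cases m
      · rw [hφ0, hφ'0]
      · rw [hφ1, hφ'1, hagree 0 (by omega)]
    | succ j ih =>
      intro hj m hm
      have ih' := ih (by omega)
      rcases Nat.lt_or_ge m (j + 2) with hlt | hge
      · exact ih' m (by omega)
      · obtain rfl : m = j + 2 := by omega
        funext p
        have e := eikonal_step n Rk z nk nk' φ φ' hrec hrec' j ih' p
        rw [hagree (j + 1) (by omega), sub_self, hφ1] at e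
        have hne : 2 * ((j + 1 : ℕ) + 1 : ℂ) * rho n (Rk 0) (nk 0) z p ≠ 0 :=
          mul_ne_zero (mul_ne_zero two_ne_zero (Nat.cast_add_one_ne_zero _)) (hρ p)
        exact sub_eq_zero.mp ((mul_eq_zero.mp e).resolve_left hne)
  obtain ⟨j, rfl⟩ : ∃ j, k = j + 1 := ⟨k - 1, by omega⟩
  have hkey := key j le_rfl
  refine ⟨fun p => congrFun (hkey _ le_rfl) p, fun p => ?_⟩
  have e := eikonal_step n Rk z nk nk' φ φ' hrec hrec' j hkey p
  rw [hφ1] at e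
  have hne : 2 * ((j + 1 : ℕ) + 1 : ℂ) * rho n (Rk 0) (nk 0) z p ≠ 0 :=
    mul_ne_zero (mul_ne_zero two_ne_zero (Nat.cast_add_one_ne_zero _)) (hρ p)
  have e2 : φ (j + 2) p - φ' (j + 2) p =
      (z * (nk (j + 1) p.1 : ℂ) - z * (nk' (j + 1) p.1 : ℂ)) /
        (2 * ((j + 1 : ℕ) + 1 : ℂ) * rho n (Rk 0) (nk 0) z p) := by
    rw [eq_div_iff hne, ← e]
    ring
  rw [sub_div] at e2
  linear_combination e2
end
end

section
/- For all integers k ≥ 1 and j ≥ 0, the function a_{k,j} − ((k+j)!/k!) · zψ n_{k+j} /(−2iρ)^{j+2} is independent of all n_ℓ with ℓ ≥ k+j; that is, if two refraction indices n, ñ satisfy n_m = ñ_m on Γ for all 0 ≤ m ≤ k+j−1, then a_{k,j} − ((k+j)!/k!) zψ n_{k+j}/(−2iρ)^{j+2} = ã'_{k,j} − ((k+j)!/k!) zψ ñ_{k+j}/(−2iρ)^{j+2}, where ã'_{k,j} are the amplitude coefficients built from ñ. -/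
/- Setting: normal coordinates near the boundary; the chart of Γ is modelled by ℝ^n.
Data: Taylor coefficients `R_ℓ` of the metric matrix, boundary Taylor coefficients
`n_k` of the refraction index, `ρ = √(−r₀ + z n₀)` with `Im ρ > 0`.  `φ_k` solve the
eikonal recursion (3.12) with `φ₀ = −⟨x',ξ'⟩`, `φ₁ = ρ`, while `φ̃_k` solve the free
(n-independent) recursion (3.16) with `φ̃₀ = −⟨x',ξ'⟩`, `φ̃₁ = i√r₀`.
`η = φ₀(r₀/δ₀)` is the cutoff near `ξ' = 0`. -/

noncomputable section

variable (n : ℕ)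

/-- The free eikonal recursion (3.16) (right-hand side `0`). -/
def FreeEikonalRec
    (Rk : ℕ → EuclideanSpace ℝ (Fin n) → (EuclideanSpace ℝ (Fin n) →L[ℝ] EuclideanSpace ℝ (Fin n)))
    (φ : ℕ → (EuclideanSpace ℝ (Fin n)) × (EuclideanSpace ℝ (Fin n)) → ℂ) : Prop :=
  ∀ K : ℕ, ∀ p,
    (∑ k ∈ Finset.range (K + 1),
      (((k + 1) * (K - k + 1) : ℕ) : ℂ) * φ (k + 1) p * φ (K - k + 1) p) +
    (∑ ℓ ∈ Finset.range (K + 1), ∑ k ∈ Finset.range (K + 1 - ℓ),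
      RPair n (Rk ℓ) (φ k) (φ (K - ℓ - k)) p) = 0

/-- Mixed derivative `∂_{x'}^α ∂_{ξ'}^β a` evaluated on directions `v`, `w`. -/
def Dmix (a : (EuclideanSpace ℝ (Fin n)) × (EuclideanSpace ℝ (Fin n)) → ℂ) (α β : ℕ)
    (v : Fin α → EuclideanSpace ℝ (Fin n)) (w : Fin β → EuclideanSpace ℝ (Fin n))
    (p : (EuclideanSpace ℝ (Fin n)) × (EuclideanSpace ℝ (Fin n))) : ℂ :=
  iteratedFDeriv ℝ (α + β) a p
    (Fin.append (fun i => ((v i), (0 : EuclideanSpace ℝ (Fin n))))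
      (fun i => ((0 : EuclideanSpace ℝ (Fin n)), w i)))

/-- The Japanese bracket `⟨ξ'⟩`. -/
def jap {n : ℕ} (ξ : EuclideanSpace ℝ (Fin n)) : ℝ := Real.sqrt (1 + ‖ξ‖ ^ 2)


/-- Second derivative of a symbol in base directions `v, w`. -/
def Dxx (f : (EuclideanSpace ℝ (Fin n)) × (EuclideanSpace ℝ (Fin n)) → ℂ)
    (p : (EuclideanSpace ℝ (Fin n)) × (EuclideanSpace ℝ (Fin n)))
    (v w : EuclideanSpace ℝ (Fin n)) : ℂ :=
  fderiv ℝ (fun q => fderiv ℝ f q ((v, 0) :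
    (EuclideanSpace ℝ (Fin n)) × (EuclideanSpace ℝ (Fin n)))) p (w, 0)

/-- `⟨R_ℓ ∇_{x'}·, ∇_{x'}f⟩ = ∑_{a,b} (R_ℓ)_{ab} ∂_a ∂_b f` (the second-order part). -/
def TrR (Rℓ : EuclideanSpace ℝ (Fin n) → (EuclideanSpace ℝ (Fin n) →L[ℝ] EuclideanSpace ℝ (Fin n)))
    (f : (EuclideanSpace ℝ (Fin n)) × (EuclideanSpace ℝ (Fin n)) → ℂ)
    (p : (EuclideanSpace ℝ (Fin n)) × (EuclideanSpace ℝ (Fin n))) : ℂ :=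
  ∑ a : Fin n, ∑ b : Fin n,
    ((inner ℝ (Rℓ p.1 (ev n a)) (ev n b) : ℝ) : ℂ) * Dxx n f p (ev n a) (ev n b)

/-- The coefficient `φ_k^Δ` of `x₁^k` in the Taylor expansion of `Δφ`:
`φ_k^Δ = (k+1)(k+2)φ_{k+2} + ∑_{ℓ+ν=k} (⟨R_ℓ∇·,∇φ_ν⟩ + q_ℓ^♯(ν+1)φ_{ν+1} + ⟨q_ℓ^♭,∇φ_ν⟩)`. -/
def phiDel
    (Rk : ℕ → EuclideanSpace ℝ (Fin n) → (EuclideanSpace ℝ (Fin n) →L[ℝ] EuclideanSpace ℝ (Fin n)))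
    (qs : ℕ → EuclideanSpace ℝ (Fin n) → ℝ)
    (qf : ℕ → EuclideanSpace ℝ (Fin n) → EuclideanSpace ℝ (Fin n))
    (φ : ℕ → (EuclideanSpace ℝ (Fin n)) × (EuclideanSpace ℝ (Fin n)) → ℂ) (k : ℕ)
    (p : (EuclideanSpace ℝ (Fin n)) × (EuclideanSpace ℝ (Fin n))) : ℂ :=
  (((k + 1) * (k + 2) : ℕ) : ℂ) * φ (k + 2) p +
    ∑ ℓ ∈ Finset.range (k + 1),
      (TrR n (Rk ℓ) (φ (k - ℓ)) p +
        ((qs ℓ p.1 : ℝ) : ℂ) * (((k - ℓ + 1 : ℕ) : ℕ) : ℂ) * φ (k - ℓ + 1) p +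
        Dx n (φ (k - ℓ)) p (qf ℓ p.1))

/-- The coefficient `a_{k,j}^Δ` of `x₁^k` in the Taylor expansion of `Δ a_j`. -/
def aDel
    (Rk : ℕ → EuclideanSpace ℝ (Fin n) → (EuclideanSpace ℝ (Fin n) →L[ℝ] EuclideanSpace ℝ (Fin n)))
    (qs : ℕ → EuclideanSpace ℝ (Fin n) → ℝ)
    (qf : ℕ → EuclideanSpace ℝ (Fin n) → EuclideanSpace ℝ (Fin n))
    (a : ℕ → ℕ → (EuclideanSpace ℝ (Fin n)) × (EuclideanSpace ℝ (Fin n)) → ℂ) (k j : ℕ)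
    (p : (EuclideanSpace ℝ (Fin n)) × (EuclideanSpace ℝ (Fin n))) : ℂ :=
  (((k + 1) * (k + 2) : ℕ) : ℂ) * a (k + 2) j p +
    ∑ ℓ ∈ Finset.range (k + 1),
      (TrR n (Rk ℓ) (a (k - ℓ) j) p +
        ((qs ℓ p.1 : ℝ) : ℂ) * (((k - ℓ + 1 : ℕ) : ℕ) : ℂ) * a (k - ℓ + 1) j p +
        Dx n (a (k - ℓ) j) p (qf ℓ p.1))

/-- The transport recursion (3.18):
`∑_{k₁+k₂=k} 2i(k₁+1)(k₂+1)φ_{k₁+1}a_{k₂+1,j} + ∑_{k₁+k₂+k₃=k} 2i⟨R_{k₁}∇φ_{k₂},∇a_{k₃,j}⟩`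
`+ ∑_{k₁+k₂=k} iφ_{k₁}^Δ a_{k₂,j} = −a_{k,j−1}^Δ`  (with `a_{k,−1} = 0`). -/
def TransportRec
    (Rk : ℕ → EuclideanSpace ℝ (Fin n) → (EuclideanSpace ℝ (Fin n) →L[ℝ] EuclideanSpace ℝ (Fin n)))
    (qs : ℕ → EuclideanSpace ℝ (Fin n) → ℝ)
    (qf : ℕ → EuclideanSpace ℝ (Fin n) → EuclideanSpace ℝ (Fin n))
    (φ : ℕ → (EuclideanSpace ℝ (Fin n)) × (EuclideanSpace ℝ (Fin n)) → ℂ)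
    (a : ℕ → ℕ → (EuclideanSpace ℝ (Fin n)) × (EuclideanSpace ℝ (Fin n)) → ℂ) : Prop :=
  ∀ j k : ℕ, ∀ p,
    (∑ k₁ ∈ Finset.range (k + 1), 2 * Complex.I *
      (((k₁ + 1) * (k - k₁ + 1) : ℕ) : ℂ) * φ (k₁ + 1) p * a (k - k₁ + 1) j p) +
    (∑ k₁ ∈ Finset.range (k + 1), ∑ k₂ ∈ Finset.range (k + 1 - k₁), 2 * Complex.I *
      RPair n (Rk k₁) (φ k₂) (a (k - k₁ - k₂) j) p) +
    (∑ k₁ ∈ Finset.range (k + 1), Complex.I * phiDel n Rk qs qf φ k₁ p *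
      a (k - k₁) j p) =
    (if j = 0 then 0 else -aDel n Rk qs qf a k (j - 1) p)

theorem aux_phi_step (n : ℕ)
    (Rk : ℕ → EuclideanSpace ℝ (Fin n) →
      (EuclideanSpace ℝ (Fin n) →L[ℝ] EuclideanSpace ℝ (Fin n)))
    (z : ℂ) (nk nk' : ℕ → EuclideanSpace ℝ (Fin n) → ℝ)
    (φ φ' : ℕ → (EuclideanSpace ℝ (Fin n)) × (EuclideanSpace ℝ (Fin n)) → ℂ)
    (hφrec : EikonalRec n Rk nk z φ) (hφ'rec : EikonalRec n Rk nk' z φ')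
    (K : ℕ) (h : ∀ m ≤ K + 1, φ m = φ' m)
    (p : (EuclideanSpace ℝ (Fin n)) × (EuclideanSpace ℝ (Fin n))) :
    2 * ((K : ℂ) + 2) * φ 1 p * (φ (K + 2) p - φ' (K + 2) p) =
      z * ((nk (K + 1) p.1 : ℂ) - (nk' (K + 1) p.1 : ℂ)) := by
  have e1 := hφrec (K + 1) p
  have e2 := hφ'rec (K + 1) p
  have hR : (∑ ℓ ∈ Finset.range (K + 1 + 1), ∑ k ∈ Finset.range (K + 1 + 1 - ℓ),
      RPair n (Rk ℓ) (φ k) (φ (K + 1 - ℓ - k)) p) =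
      ∑ ℓ ∈ Finset.range (K + 1 + 1), ∑ k ∈ Finset.range (K + 1 + 1 - ℓ),
      RPair n (Rk ℓ) (φ' k) (φ' (K + 1 - ℓ - k)) p := by
    refine Finset.sum_congr rfl fun ℓ hℓ => Finset.sum_congr rfl fun k hk => ?_
    rw [Finset.mem_range] at hℓ hk
    rw [h k (by omega), h (K + 1 - ℓ - k) (by omega)]
  have hS : (∑ k ∈ Finset.range K, (((k + 1 + 1) * (K + 1 - (k + 1) + 1) : ℕ) : ℂ) *
        φ (k + 1 + 1) p * φ (K + 1 - (k + 1) + 1) p) =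
      ∑ k ∈ Finset.range K, (((k + 1 + 1) * (K + 1 - (k + 1) + 1) : ℕ) : ℂ) *
        φ' (k + 1 + 1) p * φ' (K + 1 - (k + 1) + 1) p := by
    refine Finset.sum_congr rfl fun k hk => ?_
    rw [Finset.mem_range] at hk
    rw [h (k + 1 + 1) (by omega), h (K + 1 - (k + 1) + 1) (by omega)]
  rw [hR, Finset.sum_range_succ, Finset.sum_range_succ', hS] at e1
  rw [Finset.sum_range_succ, Finset.sum_range_succ'] at e2
  have h1 := h 1 (by omega)
  simp only [Nat.sub_self, Nat.sub_zero, zero_add] at e1 e2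
  rw [← h1] at e2
  push_cast at e1 e2
  linear_combination e1 - e2

theorem aux_a_step (n : ℕ)
    (Rk : ℕ → EuclideanSpace ℝ (Fin n) →
      (EuclideanSpace ℝ (Fin n) →L[ℝ] EuclideanSpace ℝ (Fin n)))
    (qs : ℕ → EuclideanSpace ℝ (Fin n) → ℝ)
    (qf : ℕ → EuclideanSpace ℝ (Fin n) → EuclideanSpace ℝ (Fin n))
    (φ φ' : ℕ → (EuclideanSpace ℝ (Fin n)) × (EuclideanSpace ℝ (Fin n)) → ℂ)
    (a a' : ℕ → ℕ → (EuclideanSpace ℝ (Fin n)) × (EuclideanSpace ℝ (Fin n)) → ℂ)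
    (harec : TransportRec n Rk qs qf φ a) (ha'rec : TransportRec n Rk qs qf φ' a')
    (k j : ℕ) (h : ∀ m ≤ k + 1, φ m = φ' m) (ha : ∀ m ≤ k, a m j = a' m j)
    (haj : j ≠ 0 → ∀ m ≤ k + 1, a m (j - 1) = a' m (j - 1))
    (p : (EuclideanSpace ℝ (Fin n)) × (EuclideanSpace ℝ (Fin n))) :
    2 * Complex.I * ((k : ℂ) + 1) * φ 1 p * (a (k + 1) j p - a' (k + 1) j p) +
      Complex.I * ((k : ℂ) + 1) * ((k : ℂ) + 2) * (φ (k + 2) p - φ' (k + 2) p) * a 0 j p =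
      if j = 0 then 0 else
        -(((k : ℂ) + 1) * ((k : ℂ) + 2) * (a (k + 2) (j - 1) p - a' (k + 2) (j - 1) p)) := by
  have e1 := harec j k p
  have e2 := ha'rec j k p
  have hR : (∑ k₁ ∈ Finset.range (k + 1), ∑ k₂ ∈ Finset.range (k + 1 - k₁), 2 * Complex.I *
      RPair n (Rk k₁) (φ k₂) (a (k - k₁ - k₂) j) p) =
      ∑ k₁ ∈ Finset.range (k + 1), ∑ k₂ ∈ Finset.range (k + 1 - k₁), 2 * Complex.I *
      RPair n (Rk k₁) (φ' k₂) (a' (k - k₁ - k₂) j) p := by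
    refine Finset.sum_congr rfl fun ℓ hℓ => Finset.sum_congr rfl fun m hm => ?_
    rw [Finset.mem_range] at hℓ hm
    rw [h m (by omega), ha (k - ℓ - m) (by omega)]
  have hS : (∑ k₁ ∈ Finset.range k, 2 * Complex.I *
      (((k₁ + 1 + 1) * (k - (k₁ + 1) + 1) : ℕ) : ℂ) * φ (k₁ + 1 + 1) p *
        a (k - (k₁ + 1) + 1) j p) =
      ∑ k₁ ∈ Finset.range k, 2 * Complex.I *
      (((k₁ + 1 + 1) * (k - (k₁ + 1) + 1) : ℕ) : ℂ) * φ' (k₁ + 1 + 1) p *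
        a' (k - (k₁ + 1) + 1) j p := by
    refine Finset.sum_congr rfl fun m hm => ?_
    rw [Finset.mem_range] at hm
    rw [h (m + 1 + 1) (by omega), ha (k - (m + 1) + 1) (by omega)]
  have hlow : ∀ m ≤ k, (∑ ℓ ∈ Finset.range (m + 1),
      (TrR n (Rk ℓ) (φ (m - ℓ)) p +
        ((qs ℓ p.1 : ℝ) : ℂ) * (((m - ℓ + 1 : ℕ) : ℕ) : ℂ) * φ (m - ℓ + 1) p +
        Dx n (φ (m - ℓ)) p (qf ℓ p.1))) = ∑ ℓ ∈ Finset.range (m + 1),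
      (TrR n (Rk ℓ) (φ' (m - ℓ)) p +
        ((qs ℓ p.1 : ℝ) : ℂ) * (((m - ℓ + 1 : ℕ) : ℕ) : ℂ) * φ' (m - ℓ + 1) p +
        Dx n (φ' (m - ℓ)) p (qf ℓ p.1)) := by
    intro m hm
    refine Finset.sum_congr rfl fun ℓ hℓ => ?_
    rw [h (m - ℓ) (by omega), h (m - ℓ + 1) (by omega)]
  have hT : (∑ k₁ ∈ Finset.range k, Complex.I * phiDel n Rk qs qf φ k₁ p * a (k - k₁) j p) =
      ∑ k₁ ∈ Finset.range k, Complex.I * phiDel n Rk qs qf φ' k₁ p * a' (k - k₁) j p := by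
    refine Finset.sum_congr rfl fun m hm => ?_
    rw [Finset.mem_range] at hm
    unfold phiDel
    rw [hlow m hm.le, h (m + 2) (by omega), ha (k - m) (by omega)]
  have hd : phiDel n Rk qs qf φ k p - phiDel n Rk qs qf φ' k p =
      ((k : ℂ) + 1) * ((k : ℂ) + 2) * (φ (k + 2) p - φ' (k + 2) p) := by
    unfold phiDel
    rw [hlow k le_rfl]
    push_cast
    ring
  have hrhs : ((if j = 0 then 0 else -aDel n Rk qs qf a k (j - 1) p) : ℂ) -
      (if j = 0 then 0 else -aDel n Rk qs qf a' k (j - 1) p) = if j = 0 then 0 else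
        -(((k : ℂ) + 1) * ((k : ℂ) + 2) * (a (k + 2) (j - 1) p - a' (k + 2) (j - 1) p)) := by
    by_cases hj : j = 0
    · simp [hj]
    · rw [if_neg hj, if_neg hj, if_neg hj]
      have hl : (∑ ℓ ∈ Finset.range (k + 1),
          (TrR n (Rk ℓ) (a (k - ℓ) (j - 1)) p +
          ((qs ℓ p.1 : ℝ) : ℂ) * (((k - ℓ + 1 : ℕ) : ℕ) : ℂ) * a (k - ℓ + 1) (j - 1) p +
          Dx n (a (k - ℓ) (j - 1)) p (qf ℓ p.1))) = ∑ ℓ ∈ Finset.range (k + 1),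
          (TrR n (Rk ℓ) (a' (k - ℓ) (j - 1)) p +
          ((qs ℓ p.1 : ℝ) : ℂ) * (((k - ℓ + 1 : ℕ) : ℕ) : ℂ) * a' (k - ℓ + 1) (j - 1) p +
          Dx n (a' (k - ℓ) (j - 1)) p (qf ℓ p.1)) := by
        refine Finset.sum_congr rfl fun ℓ hℓ => ?_
        rw [haj hj (k - ℓ) (by omega), haj hj (k - ℓ + 1) (by omega)]
      unfold aDel
      rw [hl]
      push_cast
      ring
  rw [← hrhs, ← e1, ← e2, Finset.sum_range_succ', hS, hR,
    Finset.sum_range_succ (fun k₁ => Complex.I * phiDel n Rk qs qf φ k₁ p * a (k - k₁) j p), hT,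
    Finset.sum_range_succ' (fun k₁ => 2 * Complex.I *
      (((k₁ + 1) * (k - k₁ + 1) : ℕ) : ℂ) * φ' (k₁ + 1) p * a' (k - k₁ + 1) j p),
    Finset.sum_range_succ (fun k₁ => Complex.I * phiDel n Rk qs qf φ' k₁ p * a' (k - k₁) j p)]
  simp only [Nat.sub_self, Nat.sub_zero, zero_add]
  rw [← h 1 (by omega), ← ha 0 (by omega)]
  push_cast
  linear_combination (-Complex.I * a 0 j p) * hd

theorem aux_rho_ne (w : ℂ) (hw : w ≠ 0) : ssqrt w ≠ 0 := by
  have : w ^ (1 / 2 : ℂ) ≠ 0 := by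
    rw [Complex.cpow_def_of_ne_zero hw]; exact Complex.exp_ne_zero _
  unfold ssqrt
  split_ifs
  · exact this
  · exact neg_ne_zero.mpr this

theorem aux_arg_ne (z : ℂ) (hz : Zall z) (r c : ℝ) (hr : 0 ≤ r) (hc : 0 < c) :
    -(r : ℂ) + z * (c : ℂ) ≠ 0 := by
  intro h
  have h1 := congrArg Complex.re h
  have h2 := congrArg Complex.im h
  simp at h1 h2
  have him : z.im = 0 := by
    rcases h2 with h2 | h2
    · exact h2
    · exact absurd h2 hc.ne'
  rcases hz with hz | hz | hz
  · simp [him] at hz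
  · rw [hz.1] at h1; linarith
  · simp [him] at hz

/-- **Lemma 3.6.** For all integers `k ≥ 1`, `j ≥ 0`, the function
`a_{k,j} − ((k+j)!/k!) zψ n_{k+j}/(−2iρ)^{j+2}` is independent of all `n_ℓ` with
`ℓ ≥ k+j`: if two refraction indices have the same boundary Taylor coefficients `n_m`
for `m < k+j`, then the corresponding amplitude coefficients satisfy
`a_{k,j} − ((k+j)!/k!) zψ n_{k+j}/(−2iρ)^{j+2}
  = a'_{k,j} − ((k+j)!/k!) zψ n'_{k+j}/(−2iρ)^{j+2}`. -/
theorem statement_13 (n : ℕ) (hn : 0 < n)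
    (Rk : ℕ → EuclideanSpace ℝ (Fin n) →
      (EuclideanSpace ℝ (Fin n) →L[ℝ] EuclideanSpace ℝ (Fin n)))
    (hRk : ∀ ℓ, ContDiff ℝ (⊤ : ℕ∞) (Rk ℓ))
    (hR₀ell : ∃ c : ℝ, 0 < c ∧ ∀ x ξ, c * ‖ξ‖ ^ 2 ≤ (inner ℝ (Rk 0 x ξ) ξ : ℝ))
    (qs : ℕ → EuclideanSpace ℝ (Fin n) → ℝ) (hqs : ∀ ℓ, ContDiff ℝ (⊤ : ℕ∞) (qs ℓ))
    (qf : ℕ → EuclideanSpace ℝ (Fin n) → EuclideanSpace ℝ (Fin n))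
    (hqf : ∀ ℓ, ContDiff ℝ (⊤ : ℕ∞) (qf ℓ))
    (z : ℂ) (hz : Zall z)
    -- two refraction indices with the same boundary Taylor coefficients below k+j
    (nk nk' : ℕ → EuclideanSpace ℝ (Fin n) → ℝ)
    (hnk : ∀ m, ContDiff ℝ (⊤ : ℕ∞) (nk m)) (hnk' : ∀ m, ContDiff ℝ (⊤ : ℕ∞) (nk' m))
    (hn₀pos : ∃ c : ℝ, 0 < c ∧ ∀ x, c ≤ nk 0 x)
    (k j : ℕ) (hk : 1 ≤ k)
    (hagree : ∀ m < k + j, nk m = nk' m)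
    -- the corresponding phase coefficients
    (φ φ' : ℕ → (EuclideanSpace ℝ (Fin n)) × (EuclideanSpace ℝ (Fin n)) → ℂ)
    (hφsmooth : ∀ m, ContDiff ℝ (⊤ : ℕ∞) (φ m)) (hφ'smooth : ∀ m, ContDiff ℝ (⊤ : ℕ∞) (φ' m))
    (hφ0 : φ 0 = fun p => -((inner ℝ p.1 p.2 : ℝ) : ℂ))
    (hφ'0 : φ' 0 = fun p => -((inner ℝ p.1 p.2 : ℝ) : ℂ))
    (hφ1 : φ 1 = rho n (Rk 0) (nk 0) z) (hφ'1 : φ' 1 = rho n (Rk 0) (nk' 0) z)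
    (hφrec : EikonalRec n Rk nk z φ) (hφ'rec : EikonalRec n Rk nk' z φ')
    -- the boundary cutoff ψ and the corresponding amplitude coefficients
    (ψb : EuclideanSpace ℝ (Fin n) → ℂ) (hψb : ContDiff ℝ (⊤ : ℕ∞) ψb)
    (hψbsupp : HasCompactSupport ψb)
    (a a' : ℕ → ℕ → (EuclideanSpace ℝ (Fin n)) × (EuclideanSpace ℝ (Fin n)) → ℂ)
    (hasmooth : ∀ k' j', ContDiff ℝ (⊤ : ℕ∞) (a k' j'))
    (ha'smooth : ∀ k' j', ContDiff ℝ (⊤ : ℕ∞) (a' k' j'))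
    (ha00 : a 0 0 = fun p => ψb p.1) (ha'00 : a' 0 0 = fun p => ψb p.1)
    (ha0j : ∀ j' : ℕ, 1 ≤ j' → a 0 j' = 0) (ha'0j : ∀ j' : ℕ, 1 ≤ j' → a' 0 j' = 0)
    (harec : TransportRec n Rk qs qf φ a) (ha'rec : TransportRec n Rk qs qf φ' a') :
    ∀ p, a k j p - (((k + j).factorial : ℂ) / (k.factorial : ℂ)) * z * ψb p.1 *
        (nk (k + j) p.1 : ℂ) / (-2 * Complex.I * rho n (Rk 0) (nk 0) z p) ^ (j + 2) =
      a' k j p - (((k + j).factorial : ℂ) / (k.factorial : ℂ)) * z * ψb p.1 *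
        (nk' (k + j) p.1 : ℂ) / (-2 * Complex.I * rho n (Rk 0) (nk 0) z p) ^ (j + 2) := by
  have hρ : ∀ p, rho n (Rk 0) (nk 0) z p ≠ 0 := by
    intro p
    obtain ⟨c, hc, hcn⟩ := hn₀pos
    obtain ⟨d, hd, hdR⟩ := hR₀ell
    exact aux_rho_ne _ (aux_arg_ne z hz _ _ (le_trans (by positivity) (hdR p.1 p.2))
      (lt_of_lt_of_le hc (hcn p.1)))
  have hφ : ∀ m ≤ k + j, φ m = φ' m := by
    intro m
    induction m using Nat.strong_induction_on with
    | _ m ih =>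
      intro hm
      match m, ih, hm with
      | 0, _, _ => rw [hφ0, hφ'0]
      | 1, _, _ => rw [hφ1, hφ'1, hagree 0 (by omega)]
      | K + 2, ih, hm =>
        funext p
        have e := aux_phi_step n Rk z nk nk' φ φ' hφrec hφ'rec K
          (fun m hm' => ih m (by omega) (by omega)) p
        rw [hagree (K + 1) (by omega), sub_self, mul_zero, hφ1] at e
        have hK : (K : ℂ) + 2 ≠ 0 := by exact_mod_cast (by omega : K + 2 ≠ 0)
        have := mul_eq_zero.mp e
        rcases this with h | h
        · exact absurd h (by simp [hK, hρ p])
        · exact sub_eq_zero.mp h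
  have ha : ∀ j' k', k' + j' < k + j → a k' j' = a' k' j' := by
    intro j'
    induction j' with
    | zero =>
      intro k'
      induction k' using Nat.strong_induction_on with
      | _ m ih =>
        intro hm
        match m, ih, hm with
        | 0, _, _ => rw [ha00, ha'00]
        | K + 1, ih, hm =>
          funext p
          have e := aux_a_step n Rk qs qf φ φ' a a' harec ha'rec K 0
            (fun m hm' => hφ m (by omega)) (fun m hm' => ih m (by omega) (by omega))
            (fun h => absurd rfl h) p
          rw [hφ (K + 2) (by omega), sub_self, hφ1, if_pos rfl] at e
          have hK : (K : ℂ) + 1 ≠ 0 := by exact_mod_cast (by omega : K + 1 ≠ 0)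
          have h0 : 2 * Complex.I * ((K : ℂ) + 1) * rho n (Rk 0) (nk 0) z p *
            (a (K + 1) 0 p - a' (K + 1) 0 p) = 0 := by linear_combination e
          rcases mul_eq_zero.mp h0 with h | h
          · exact absurd h (by simp [hK, hρ p])
          · exact sub_eq_zero.mp h
    | succ j' ihj =>
      intro k'
      induction k' using Nat.strong_induction_on with
      | _ m ih =>
        intro hm
        match m, ih, hm with
        | 0, _, _ => rw [ha0j _ (by omega), ha'0j _ (by omega)]
        | K + 1, ih, hm =>
          funext p
          have e := aux_a_step n Rk qs qf φ φ' a a' harec ha'rec K (j' + 1)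
            (fun m hm' => hφ m (by omega)) (fun m hm' => ih m (by omega) (by omega))
            (fun _ m hm' => ihj m (by omega)) p
          rw [hφ (K + 2) (by omega), sub_self, hφ1, if_neg (by omega), Nat.add_sub_cancel,
            ihj (K + 2) (by omega), sub_self] at e
          have hK : (K : ℂ) + 1 ≠ 0 := by exact_mod_cast (by omega : K + 1 ≠ 0)
          have h0 : 2 * Complex.I * ((K : ℂ) + 1) * rho n (Rk 0) (nk 0) z p *
            (a (K + 1) (j' + 1) p - a' (K + 1) (j' + 1) p) = 0 := by linear_combination e
          rcases mul_eq_zero.mp h0 with h | h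
          · exact absurd h (by simp [hK, hρ p])
          · exact sub_eq_zero.mp h
  have key : ∀ j' K, K + 1 + j' = k + j → ∀ p,
      a (K + 1) j' p - a' (K + 1) j' p =
        (((k + j).factorial : ℂ) / ((K + 1).factorial : ℂ)) * z * ψb p.1 *
        ((nk (k + j) p.1 : ℂ) - (nk' (k + j) p.1 : ℂ)) /
        (-2 * Complex.I * rho n (Rk 0) (nk 0) z p) ^ (j' + 2) := by
    intro j'
    induction j' with
    | zero =>
      intro K hK p
      have e := aux_a_step n Rk qs qf φ φ' a a' harec ha'rec K 0
        (fun m hm' => hφ m (by omega)) (fun m hm' => ha 0 m (by omega))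
        (fun h => absurd rfl h) p
      have e' := aux_phi_step n Rk z nk nk' φ φ' hφrec hφ'rec K
          (fun m hm' => hφ m (by omega)) p
      rw [if_pos rfl, ha00, hφ1] at e
      rw [hφ1] at e'
      rw [← hK]
      have hK1 : (K : ℂ) + 1 ≠ 0 := by exact_mod_cast (by omega : K + 1 ≠ 0)
      have hf : ((K + 1).factorial : ℂ) ≠ 0 := by exact_mod_cast Nat.factorial_ne_zero _
      have hr := hρ p
      simp only [add_zero, zero_add]
      rw [div_self hf, eq_div_iff (by simp [hr])]
      generalize rho n (Rk 0) (nk 0) z p = r at *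
      have hI := Complex.I_sq
      have hne : Complex.I * ((K : ℂ) + 1) ≠ 0 := mul_ne_zero Complex.I_ne_zero hK1
      apply mul_left_cancel₀ hne
      simp only at e
      linear_combination (-2 * r) * e + Complex.I * ((K : ℂ) + 1) * ψb p.1 * e' +
        4 * r ^ 2 * Complex.I * ((K : ℂ) + 1) * (a (K + 1) 0 p - a' (K + 1) 0 p) * hI
    | succ j' ihj =>
      intro K hK p
      have e := aux_a_step n Rk qs qf φ φ' a a' harec ha'rec K (j' + 1)
        (fun m hm' => hφ m (by omega)) (fun m hm' => ha (j' + 1) m (by omega))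
        (fun _ m hm' => ha j' m (by omega)) p
      rw [if_neg (by omega), Nat.add_sub_cancel, hφ1, ihj (K + 1) (by omega) p,
        ha0j _ (by omega)] at e
      have hK1 : (K : ℂ) + 1 ≠ 0 := by exact_mod_cast (by omega : K + 1 ≠ 0)
      have hK2 : (K : ℂ) + 2 ≠ 0 := by exact_mod_cast (by omega : K + 2 ≠ 0)
      have hf : ((K + 1).factorial : ℂ) ≠ 0 := by exact_mod_cast Nat.factorial_ne_zero _
      have hfs : ((K + 1 + 1).factorial : ℂ) = ((K : ℂ) + 2) * ((K + 1).factorial : ℂ) := by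
        rw [Nat.factorial_succ (K + 1)]; push_cast; ring
      have hr := hρ p
      rw [hfs] at e
      generalize rho n (Rk 0) (nk 0) z p = r at *
      have hI := Complex.I_ne_zero
      generalize ((K + 1).factorial : ℂ) = F at *
      have hs : -2 * Complex.I * r ≠ 0 := by simp [hr]
      generalize hsd : -2 * Complex.I * r = s at *
      have e2 : s * (a (K + 1) (j' + 1) p - a' (K + 1) (j' + 1) p) =
          ((k + j).factorial : ℂ) / F * z * ψb p.1 *
            ((nk (k + j) p.1 : ℂ) - (nk' (k + j) p.1 : ℂ)) / s ^ (j' + 2) := by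
        apply mul_left_cancel₀ hK1
        have e3 : ((K : ℂ) + 2) * (((k + j).factorial : ℂ) / (((K : ℂ) + 2) * F)) =
            ((k + j).factorial : ℂ) / F := by field_simp
        rw [← e3, ← hsd]
        rw [← hsd] at e
        simp only [Pi.zero_apply] at e
        linear_combination -e
      apply mul_left_cancel₀ hs
      rw [e2, pow_succ s (j' + 2)]
      field_simp
  intro p
  obtain ⟨K, rfl⟩ : ∃ K, k = K + 1 := ⟨k - 1, by omega⟩
  linear_combination key j K rfl p


end
end
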